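/- (Fractional Liouville reduction, equation form.) Let n ≥ 1 be an integer, s ∈ (0,1), let Ω ⊆ ℝⁿ be an open set, and let γ : ℝⁿ → ℝ be a smooth function with γ(x) ≥ γ₀ for some constant γ₀ > 0 and such that γ − 1 is compactly supported. Let u : ℝⁿ → ℝ be a Schwartz function and set w := γ^{1/2} u. Then the following are equivalent: (i) B_γ(u, φ) = 0 for all smooth compactly supported φ with support in Ω; (ii) B_1(w, φ) + ∫_{ℝⁿ} q_γ(x) w(x) φ(x) dx = 0 for all smooth compactly supported φ with support in Ω. That is, u is a weak solution of C^s_γ u = 0 in Ω if and only if w = γ^{1/2}u is a weak solution of ((−Δ)^s + q_γ) w = 0 in Ω. -/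

import Mathlib

open MeasureTheory
noncomputable section

/-- Euclidean space ℝⁿ. -/
abbrev RR (n : ℕ) := EuclideanSpace ℝ (Fin n)

/-- The constant c_{n,s} = 4^s Γ(n/2+s) / (π^{n/2} |Γ(-s)|). -/
def cns (n : ℕ) (s : ℝ) : ℝ :=
  (4 : ℝ) ^ s * Real.Gamma ((n : ℝ) / 2 + s) / (Real.pi ^ ((n : ℝ) / 2) * |Real.Gamma (-s)|)

/-- The fractional conductivity bilinear form
B_γ(u,v) = (c_{n,s}/2) ∬ γ^{1/2}(x) γ^{1/2}(y) (u(x)-u(y))(v(x)-v(y)) / |x-y|^{n+2s} dx dy. -/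
def Bform (n : ℕ) (s : ℝ) (γ u v : RR n → ℝ) : ℝ :=
  (cns n s / 2) * ∫ p : RR n × RR n,
    Real.sqrt (γ p.1) * Real.sqrt (γ p.2) * (u p.1 - u p.2) * (v p.1 - v p.2) /
      ‖p.1 - p.2‖ ^ ((n : ℝ) + 2 * s)

/-- The Liouville potential q_γ = -γ^{-1/2} (-Δ)^s γ^{1/2}, with the fractional Laplacian
given by the symmetrized singular integral. -/
def liouvillePot (n : ℕ) (s : ℝ) (γ : RR n → ℝ) (x : RR n) : ℝ :=
  -(Real.sqrt (γ x))⁻¹ * ((cns n s / 2) * ∫ y : RR n,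
    (2 * Real.sqrt (γ x) - Real.sqrt (γ (x + y)) - Real.sqrt (γ (x - y))) /
      ‖y‖ ^ ((n : ℝ) + 2 * s))

/-!
Write `a = √γ` and `w = a u`. Pointwise
`a(x) a(y) (u(x) - u(y)) (φ(x) - φ(y))`
`  = (w(x) - w(y)) ((aφ)(x) - (aφ)(y)) - (a(x) - a(y)) ((wφ)(x) - (wφ)(y))`,
and the two terms on the right are separately integrable against `|x - y|^{-(n+2s)}`. A discrete
integration by parts turns the second one into `∫ (-Δ)^s a · w φ = -∫ q_γ w (a φ)`, so that
`B_γ(u, φ) = B_1(w, aφ) + ∫ q_γ w (aφ)`. Multiplication by `a` permutes the test functions supported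
in `Ω`, whence the equivalence.
-/

section BoundedLipschitz

variable {X : Type*} [PseudoMetricSpace X] {f g : X → ℝ}

/-- Bounded globally Lipschitz real functions: the class on which the nonlocal forms below are
finite as soon as one argument has compact support. -/
structure BoundedLipschitz (f : X → ℝ) : Prop where
  bounded : ∃ M, ∀ x, |f x| ≤ M
  lipschitz : ∃ L, LipschitzWith L f

namespace BoundedLipschitz

lemma continuous (hf : BoundedLipschitz f) : Continuous f :=
  hf.lipschitz.choose_spec.continuous

lemma exists_abs_sub_le_mul_min (hf : BoundedLipschitz f) :
    ∃ C, 0 ≤ C ∧ ∀ x y, |f x - f y| ≤ C * min 1 (dist x y) := by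
  obtain ⟨M, hM⟩ := hf.bounded
  obtain ⟨L, hL⟩ := hf.lipschitz
  refine ⟨max (2 * M) L, le_max_of_le_right L.coe_nonneg, fun x y ↦ ?_⟩
  rw [mul_min_of_nonneg _ _ (le_max_of_le_right L.coe_nonneg), mul_one, le_min_iff]
  constructor
  · calc |f x - f y| ≤ |f x| + |f y| := abs_sub _ _
      _ ≤ 2 * M := by linarith [hM x, hM y]
      _ ≤ max (2 * M) L := le_max_left _ _
  · calc |f x - f y| ≤ L * dist x y := hL.dist_le_mul x y
      _ ≤ max (2 * M) L * dist x y := by gcongr; exact le_max_right _ _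

lemma mul (hf : BoundedLipschitz f) (hg : BoundedLipschitz g) :
    BoundedLipschitz fun x ↦ f x * g x := by
  obtain ⟨⟨M, hM⟩, K, hK⟩ := hf
  obtain ⟨⟨N, hN⟩, L, hL⟩ := hg
  refine ⟨⟨M * N, fun x ↦ ?_⟩, _, LipschitzWith.of_dist_le' (K := M * L + K * N) fun x y ↦ ?_⟩
  · rw [abs_mul]
    exact mul_le_mul (hM x) (hN x) (abs_nonneg _) ((abs_nonneg _).trans (hM x))
  · have hf_sub : |f x - f y| ≤ K * dist x y := hK.dist_le_mul x y
    have hg_sub : |g x - g y| ≤ L * dist x y := hL.dist_le_mul x y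
    calc |f x * g x - f y * g y| = |f x * (g x - g y) + (f x - f y) * g y| := by ring_nf
      _ ≤ |f x| * |g x - g y| + |f x - f y| * |g y| := by
        simpa only [abs_mul] using abs_add_le (f x * (g x - g y)) ((f x - f y) * g y)
      _ ≤ M * (L * dist x y) + K * dist x y * N := by
        gcongr
        exacts [(abs_nonneg _).trans (hM x), hM x, hN y]
      _ = (M * L + K * N) * dist x y := by ring

lemma of_sub_const {c : ℝ} (hf : BoundedLipschitz fun x ↦ f x - c) : BoundedLipschitz f := by
  obtain ⟨⟨M, hM⟩, L, hL⟩ := hf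
  refine ⟨⟨M + |c|, fun x ↦ ?_⟩, L, LipschitzWith.of_dist_le_mul fun x y ↦ ?_⟩
  · simpa only [sub_add_cancel] using (abs_add_le (f x - c) c).trans (by gcongr; exact hM x)
  · simpa only [dist_sub_right] using hL.dist_le_mul x y

variable {E : Type*} [NormedAddCommGroup E] [NormedSpace ℝ E] {f : E → ℝ}

lemma of_contDiff_of_hasCompactSupport {k : WithTop ℕ∞} (hk : k ≠ 0) (hf : ContDiff ℝ k f)
    (hsupp : HasCompactSupport f) : BoundedLipschitz f :=
  ⟨hsupp.exists_bound_of_continuous hf.continuous,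
    hf.lipschitzWith_of_hasCompactSupport hsupp hk⟩

lemma of_schwartzMap (u : SchwartzMap E ℝ) : BoundedLipschitz u :=
  ⟨⟨_, u.norm_le_seminorm ℝ⟩,
    ⟨SchwartzMap.seminorm ℝ 0 0 (SchwartzMap.fderivCLM ℝ E ℝ u), apply_nonneg _ _⟩,
    lipschitzWith_of_nnnorm_fderiv_le u.differentiable
      ((SchwartzMap.fderivCLM ℝ E ℝ u).norm_le_seminorm ℝ)⟩

end BoundedLipschitz

end BoundedLipschitz

section SecondDiff

/-- The centred second difference `2f(x) - f(x+z) - f(x-z)`, with the sign that makes it the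
integrand of the positive operator `(-Δ)^s`. -/
def secondDiff {E : Type*} [AddGroup E] (f : E → ℝ) (x z : E) : ℝ :=
  2 * f x - f (x + z) - f (x - z)

variable {E : Type*} [NormedAddCommGroup E]

/-- Functions whose second differences are `O(min(1, ‖z‖²))` uniformly in the base point: the class
on which the symmetrized singular integral for `(-Δ)^s` converges for every `s ∈ (0,1)`. -/
def BoundedSecondDiff (f : E → ℝ) : Prop :=
  ∃ C, 0 ≤ C ∧ ∀ x z, |secondDiff f x z| ≤ C * min 1 (‖z‖ ^ 2)

lemma BoundedSecondDiff.of_sub_const {f : E → ℝ} {c : ℝ}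
    (hf : BoundedSecondDiff fun x ↦ f x - c) : BoundedSecondDiff f := by
  have secondDiff_sub_const : secondDiff (fun x ↦ f x - c) = secondDiff f := by
    ext x z
    simp only [secondDiff]
    ring
  rwa [BoundedSecondDiff, secondDiff_sub_const] at hf

variable [NormedSpace ℝ E]

lemma norm_sub_sub_fderiv_le_of_lipschitzWith {F : Type*} [NormedAddCommGroup F]
    [NormedSpace ℝ F] {f : E → F} {L : NNReal} (hf : Differentiable ℝ f)
    (hL : LipschitzWith L (fderiv ℝ f)) (x z : E) :
    ‖f (x + z) - f x - fderiv ℝ f x z‖ ≤ L * ‖z‖ ^ 2 := by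
  have fderiv_sub_le : ∀ y ∈ Metric.closedBall x ‖z‖,
      ‖fderiv ℝ f y - fderiv ℝ f x‖ ≤ L * ‖z‖ := fun y hy ↦
    (hL.norm_sub_le y x).trans (by gcongr; exact mem_closedBall_iff_norm.1 hy)
  simpa [pow_two, mul_assoc] using
    (convex_closedBall x ‖z‖).norm_image_sub_le_of_norm_fderiv_le' (fun y _ ↦ hf y)
      fderiv_sub_le (by simp : x ∈ _) (by simp : x + z ∈ _)

lemma BoundedSecondDiff.of_contDiff_of_hasCompactSupport {f : E → ℝ} (hf : ContDiff ℝ 2 f)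
    (hsupp : HasCompactSupport f) : BoundedSecondDiff f := by
  obtain ⟨M, hM⟩ := hsupp.exists_bound_of_continuous hf.continuous
  obtain ⟨L, hL⟩ := (hf.fderiv_right (m := 1) one_add_one_eq_two.le
    ).lipschitzWith_of_hasCompactSupport (hsupp.fderiv ℝ) one_ne_zero
  have taylor := norm_sub_sub_fderiv_le_of_lipschitzWith (hf.differentiable two_ne_zero) hL
  simp only [Real.norm_eq_abs] at hM taylor
  have hC : 0 ≤ max (4 * M) (2 * L) := le_max_of_le_right (by positivity)
  refine ⟨max (4 * M) (2 * L), hC, fun x z ↦ ?_⟩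
  rw [mul_min_of_nonneg _ _ hC, mul_one, le_min_iff]
  constructor
  · refine le_max_of_le_left (abs_le.2 ?_)
    have hx := abs_le.1 (hM x)
    have hadd := abs_le.1 (hM (x + z))
    have hsub := abs_le.1 (hM (x - z))
    constructor <;> simp only [secondDiff] <;> linarith
  · calc |secondDiff f x z| ≤ 2 * L * ‖z‖ ^ 2 := by
          have hadd := abs_le.1 (taylor x z)
          have hsub := abs_le.1 (taylor x (-z))
          rw [norm_neg, map_neg, ← sub_eq_add_neg] at hsub
          rw [secondDiff, abs_le]
          constructor <;> linarith
      _ ≤ max (4 * M) (2 * L) * ‖z‖ ^ 2 := by gcongr; exact le_max_right _ _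

end SecondDiff

section Sqrt

lemma hasCompactSupport_sqrt_sub_one {X : Type*} [TopologicalSpace X] {γ : X → ℝ}
    (h : HasCompactSupport fun x ↦ γ x - 1) : HasCompactSupport fun x ↦ √(γ x) - 1 := by
  simpa [Function.comp_def] using h.comp_left (g := fun t ↦ √(t + 1) - 1) (by simp)

variable {E : Type*} [NormedAddCommGroup E] [NormedSpace ℝ E] {γ : E → ℝ}

lemma BoundedLipschitz.sqrt_of_hasCompactSupport_sub_one {k : WithTop ℕ∞} (hk : k ≠ 0)
    (hγ : ContDiff ℝ k γ) (hpos : ∀ x, 0 < γ x) (hsupp : HasCompactSupport fun x ↦ γ x - 1) :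
    BoundedLipschitz fun x ↦ √(γ x) :=
  of_sub_const <| of_contDiff_of_hasCompactSupport hk
    ((hγ.sqrt fun x ↦ (hpos x).ne').sub contDiff_const) (hasCompactSupport_sqrt_sub_one hsupp)

lemma BoundedSecondDiff.sqrt_of_hasCompactSupport_sub_one (hγ : ContDiff ℝ 2 γ)
    (hpos : ∀ x, 0 < γ x) (hsupp : HasCompactSupport fun x ↦ γ x - 1) :
    BoundedSecondDiff fun x ↦ √(γ x) :=
  of_sub_const <| of_contDiff_of_hasCompactSupport
    ((hγ.sqrt fun x ↦ (hpos x).ne').sub contDiff_const) (hasCompactSupport_sqrt_sub_one hsupp)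

end Sqrt

section Kernel

lemma integrableOn_min_one_sq_mul_rpow {s : ℝ} (hs : s ∈ Set.Ioo 0 1) :
    IntegrableOn (fun r : ℝ ↦ min 1 (r ^ 2) * r ^ (-1 - 2 * s)) (Set.Ioi 0) := by
  rw [← Set.Ioc_union_Ioi_eq_Ioi zero_le_one, integrableOn_union]
  constructor
  · have near : IntegrableOn (fun r : ℝ ↦ r ^ (1 - 2 * s)) (Set.Ioc 0 1) := by
      rw [← intervalIntegrable_iff_integrableOn_Ioc_of_le zero_le_one]
      exact intervalIntegral.intervalIntegrable_rpow' (by linarith [hs.2])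
    refine near.congr_fun (fun r ⟨hr0, hr1⟩ ↦ ?_) measurableSet_Ioc
    rw [min_eq_right (pow_le_one₀ hr0.le hr1), ← Real.rpow_natCast, ← Real.rpow_add hr0]
    exact congrArg (r ^ ·) (by push_cast; ring)
  · have far : IntegrableOn (fun r : ℝ ↦ r ^ (-1 - 2 * s)) (Set.Ioi 1) :=
      integrableOn_Ioi_rpow_of_lt (by linarith [hs.1]) one_pos
    refine far.congr_fun (fun r (hr : 1 < r) ↦ ?_) measurableSet_Ioi
    rw [min_eq_left (one_le_pow₀ hr.le), one_mul]

variable {E : Type*} [NormedAddCommGroup E] [NormedSpace ℝ E] [FiniteDimensional ℝ E]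
  [Nontrivial E] [MeasurableSpace E] [BorelSpace E] (μ : Measure E) [μ.IsAddHaarMeasure]

lemma integrable_min_one_sq_norm_div_rpow {s : ℝ} (hs : s ∈ Set.Ioo 0 1) :
    Integrable (fun x : E ↦ min 1 (‖x‖ ^ 2) / ‖x‖ ^ (Module.finrank ℝ E + 2 * s)) μ := by
  rw [integrable_fun_norm_addHaar μ
    (f := fun r ↦ min 1 (r ^ 2) / r ^ (Module.finrank ℝ E + 2 * s))]
  refine (integrableOn_min_one_sq_mul_rpow hs).congr_fun (fun r (hr : 0 < r) ↦ ?_)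
    measurableSet_Ioi
  have radial : r ^ (Module.finrank ℝ E - 1) =
      r ^ (-1 - 2 * s) * r ^ (Module.finrank ℝ E + 2 * s) := by
    rw [← Real.rpow_add hr, ← Real.rpow_natCast, Nat.cast_sub Module.finrank_pos]
    exact congrArg (r ^ ·) (by push_cast; ring)
  have := (Real.rpow_pos_of_pos hr (Module.finrank ℝ E + 2 * s)).ne'
  simp only [smul_eq_mul, radial]
  field_simp

end Kernel

section GagliardoForm

lemma abs_sub_le_mul_indicator_tsupport {X : Type*} [TopologicalSpace X] {ψ : X → ℝ}
    {b : ℝ} {x y : X} (h : |ψ x - ψ y| ≤ b) :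
    |ψ x - ψ y| ≤ b * ((tsupport ψ).indicator 1 x + (tsupport ψ).indicator 1 y) := by
  have hb : 0 ≤ b := (abs_nonneg _).trans h
  by_cases hx : x ∈ tsupport ψ <;> by_cases hy : y ∈ tsupport ψ
  · simp only [hx, hy, Set.indicator_of_mem, Pi.one_apply]
    linarith
  · simpa [hx, hy] using h
  · simpa [hx, hy] using h
  · simp [hx, hy, image_eq_zero_of_notMem_tsupport]

lemma integrable_add_mul_comp_sub {G : Type*} [AddCommGroup G] [MeasurableSpace G]
    [MeasurableAdd₂ G] [MeasurableNeg G] (μ : Measure G) [SFinite μ] [μ.IsAddRightInvariant]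
    {χ h : G → ℝ} (hχ : Integrable χ μ) (hh : Integrable h μ) (heven : Function.Even h) :
    Integrable (fun p : G × G ↦ (χ p.1 + χ p.2) * h (p.1 - p.2)) (μ.prod μ) := by
  have int_snd : Integrable (fun p : G × G ↦ χ p.2 * h (p.1 - p.2)) (μ.prod μ) :=
    hχ.convolution_integrand (.mul ℝ ℝ) hh
  have int_fst : Integrable (fun p : G × G ↦ χ p.1 * h (p.1 - p.2)) (μ.prod μ) :=
    int_snd.swap.congr (.of_forall fun p ↦ by
      simp only [Function.comp, Prod.fst_swap, Prod.snd_swap, ← neg_sub p.1 p.2, heven _])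
  simp only [add_mul]
  exact int_fst.add int_snd

variable {E : Type*} [NormedAddCommGroup E] [MeasurableSpace E]

lemma integral_sub_translate_mul_sub_translate [BorelSpace E] (μ : Measure E)
    [IsFiniteMeasureOnCompacts μ] [μ.IsAddRightInvariant] {f ψ : E → ℝ} (hf : Continuous f)
    (hψ : Continuous ψ) (hsupp : HasCompactSupport ψ) (z : E) :
    ∫ x, (f x - f (x + z)) * (ψ x - ψ (x + z)) ∂μ = ∫ x, secondDiff f x z * ψ x ∂μ := by
  have int_forward : Integrable (fun x ↦ (f x - f (x + z)) * ψ x) μ :=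
    Continuous.integrable_of_hasCompactSupport (by fun_prop) hsupp.mul_left
  have int_backward : Integrable (fun x ↦ (f (x - z) - f x) * ψ x) μ :=
    Continuous.integrable_of_hasCompactSupport (by fun_prop) hsupp.mul_left
  have int_translate : Integrable (fun x ↦ (f x - f (x + z)) * ψ (x + z)) μ := by
    simpa only [add_sub_cancel_right] using int_backward.comp_add_right z
  have translate : ∫ x, (f x - f (x + z)) * ψ (x + z) ∂μ = ∫ x, (f (x - z) - f x) * ψ x ∂μ := by
    simpa only [add_sub_cancel_right] using
      integral_add_right_eq_self (μ := μ) (fun x ↦ (f (x - z) - f x) * ψ x) z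
  simp only [mul_sub (_ - _)]
  rw [integral_sub int_forward int_translate, translate, ← integral_sub int_forward int_backward]
  congr 1 with x
  rw [secondDiff]
  ring

variable [NormedSpace ℝ E]

/-- The Gagliardo bilinear form of order `s`, without the normalizing constant `c_{n,s} / 2`. -/
def gagliardoForm (μ : Measure E) (s : ℝ) (f g : E → ℝ) : ℝ :=
  ∫ p : E × E, (f p.1 - f p.2) * (g p.1 - g p.2) /
    ‖p.1 - p.2‖ ^ (Module.finrank ℝ E + 2 * s) ∂μ.prod μ

/-- The symmetrized singular integral which represents `(-Δ)^s f (x)` up to the normalizing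
constant `c_{n,s} / 2`. -/
def fracLaplacianIntegral (μ : Measure E) (s : ℝ) (f : E → ℝ) (x : E) : ℝ :=
  ∫ z, secondDiff f x z / ‖z‖ ^ (Module.finrank ℝ E + 2 * s) ∂μ

variable [FiniteDimensional ℝ E] [BorelSpace E] (μ : Measure E) [μ.IsAddHaarMeasure]
  [Nontrivial E] {s : ℝ}

lemma integrable_gagliardoForm_integrand (hs : s ∈ Set.Ioo 0 1) {f ψ : E → ℝ}
    (hf : BoundedLipschitz f) (hψ : BoundedLipschitz ψ) (hsupp : HasCompactSupport ψ) :
    Integrable (fun p : E × E ↦ (f p.1 - f p.2) * (ψ p.1 - ψ p.2) /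
      ‖p.1 - p.2‖ ^ (Module.finrank ℝ E + 2 * s)) (μ.prod μ) := by
  obtain ⟨C, hC, hCf⟩ := hf.exists_abs_sub_le_mul_min
  obtain ⟨D, -, hDψ⟩ := hψ.exists_abs_sub_le_mul_min
  have := hf.continuous
  have := hψ.continuous
  let χ : E → ℝ := (tsupport ψ).indicator 1
  let h : E → ℝ := fun x ↦ min 1 (‖x‖ ^ 2) / ‖x‖ ^ (Module.finrank ℝ E + 2 * s)
  have hχ : Integrable χ μ :=
    (integrable_indicator_iff (isClosed_tsupport ψ).measurableSet).2
      (integrableOn_const hsupp.isCompact.measure_lt_top.ne)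
  have majorant : Integrable (fun p : E × E ↦ (χ p.1 + χ p.2) * h (p.1 - p.2)) (μ.prod μ) :=
    integrable_add_mul_comp_sub μ hχ (integrable_min_one_sq_norm_div_rpow μ hs) fun x ↦ by
      simp only [h, norm_neg]
  refine (majorant.const_mul (C * D)).mono'
    (Measurable.aestronglyMeasurable (by fun_prop)) (.of_forall fun ⟨x, y⟩ ↦ ?_)
  have min_sq : min 1 (dist x y) * min 1 (dist x y) = min 1 (‖x - y‖ ^ 2) := by
    rw [dist_eq_norm, ← pow_two, pow_left_monotoneOn.map_min zero_le_one (norm_nonneg _), one_pow]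
  rw [Real.norm_eq_abs, abs_div, abs_mul, abs_of_nonneg (Real.rpow_nonneg (norm_nonneg (x - y)) _)]
  calc |f x - f y| * |ψ x - ψ y| / ‖x - y‖ ^ (Module.finrank ℝ E + 2 * s)
      ≤ C * min 1 (dist x y) * (D * min 1 (dist x y) * (χ x + χ y)) /
          ‖x - y‖ ^ (Module.finrank ℝ E + 2 * s) := by
        gcongr
        exacts [hCf x y, abs_sub_le_mul_indicator_tsupport (hDψ x y)]
    _ = C * D * (χ x + χ y) * (min 1 (dist x y) * min 1 (dist x y)) /
          ‖x - y‖ ^ (Module.finrank ℝ E + 2 * s) := by ring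
    _ = C * D * ((χ x + χ y) * h (x - y)) := by
        rw [min_sq]
        ring

lemma integrable_secondDiff_div_mul (hs : s ∈ Set.Ioo 0 1) {f ψ : E → ℝ} (hf : Continuous f)
    (hf₂ : BoundedSecondDiff f) (hψ : Integrable ψ μ) :
    Integrable (fun p : E × E ↦
      secondDiff f p.2 p.1 / ‖p.1‖ ^ (Module.finrank ℝ E + 2 * s) * ψ p.2) (μ.prod μ) := by
  obtain ⟨C, -, hC⟩ := hf₂
  refine (((integrable_min_one_sq_norm_div_rpow μ hs).mul_prod hψ.abs).const_mul C).mono'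
    (.mul (Measurable.aestronglyMeasurable ?_) hψ.aestronglyMeasurable.comp_snd)
    (.of_forall fun ⟨z, x⟩ ↦ ?_)
  · unfold secondDiff
    fun_prop
  · have hK : 0 ≤ ‖z‖ ^ (Module.finrank ℝ E + 2 * s) := by positivity
    rw [Real.norm_eq_abs, abs_mul, abs_div, abs_of_nonneg hK, ← mul_assoc, ← mul_div_assoc]
    gcongr
    exact hC x z

theorem gagliardoForm_eq_integral_fracLaplacianIntegral_mul (hs : s ∈ Set.Ioo 0 1) {f ψ : E → ℝ}
    (hf : BoundedLipschitz f) (hf₂ : BoundedSecondDiff f) (hψ : BoundedLipschitz ψ)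
    (hsupp : HasCompactSupport ψ) :
    gagliardoForm μ s f ψ = ∫ x, fracLaplacianIntegral μ s f x * ψ x ∂μ := by
  let κ : E → ℝ := fun z ↦ ‖z‖ ^ (Module.finrank ℝ E + 2 * s)
  have shear : MeasurePreserving (MeasurableEquiv.shearAddRight E) (μ.prod μ) (μ.prod μ) :=
    measurePreserving_prod_add μ μ
  have shear_integrand : ∀ p : E × E,
      (fun q : E × E ↦ (f q.1 - f q.2) * (ψ q.1 - ψ q.2) / κ (q.1 - q.2))
        (MeasurableEquiv.shearAddRight E p) =
      (f p.1 - f (p.1 + p.2)) * (ψ p.1 - ψ (p.1 + p.2)) / κ p.2 := fun p ↦ by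
    simp [κ, MeasurableEquiv.shearAddRight]
  have int_shear : Integrable (fun p : E × E ↦
      (f p.1 - f (p.1 + p.2)) * (ψ p.1 - ψ (p.1 + p.2)) / κ p.2) (μ.prod μ) :=
    ((shear.integrable_comp_emb (MeasurableEquiv.measurableEmbedding _)).2
      (integrable_gagliardoForm_integrand μ hs hf hψ hsupp)).congr (.of_forall shear_integrand)
  calc gagliardoForm μ s f ψ
      = ∫ p : E × E, (f p.1 - f (p.1 + p.2)) * (ψ p.1 - ψ (p.1 + p.2)) / κ p.2 ∂μ.prod μ := by
        rw [gagliardoForm, ← shear.integral_comp']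
        exact integral_congr_ae (.of_forall shear_integrand)
    _ = ∫ z, ∫ x, (f x - f (x + z)) * (ψ x - ψ (x + z)) / κ z ∂μ ∂μ :=
        integral_prod_symm _ int_shear
    _ = ∫ z, ∫ x, secondDiff f x z / κ z * ψ x ∂μ ∂μ := by
        simp only [div_mul_eq_mul_div, integral_div,
          integral_sub_translate_mul_sub_translate μ hf.continuous hψ.continuous hsupp]
    _ = ∫ x, ∫ z, secondDiff f x z / κ z * ψ x ∂μ ∂μ :=
        integral_integral_swap (integrable_secondDiff_div_mul μ hs hf.continuous hf₂
          (hψ.continuous.integrable_of_hasCompactSupport hsupp))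
    _ = ∫ x, fracLaplacianIntegral μ s f x * ψ x ∂μ := by
        simp only [integral_mul_const, fracLaplacianIntegral, κ]

lemma integral_mul_mul_sub_mul_sub_eq_gagliardoForm_sub (hs : s ∈ Set.Ioo 0 1) {a u φ : E → ℝ}
    (ha : BoundedLipschitz a) (hu : BoundedLipschitz u) (hφ : BoundedLipschitz φ)
    (hsupp : HasCompactSupport φ) :
    ∫ p : E × E, a p.1 * a p.2 * (u p.1 - u p.2) * (φ p.1 - φ p.2) /
        ‖p.1 - p.2‖ ^ (Module.finrank ℝ E + 2 * s) ∂μ.prod μ =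
      gagliardoForm μ s (fun x ↦ a x * u x) (fun x ↦ a x * φ x) -
        gagliardoForm μ s a (fun x ↦ a x * u x * φ x) := by
  rw [gagliardoForm, gagliardoForm, ← integral_sub
    (integrable_gagliardoForm_integrand μ hs (ha.mul hu) (ha.mul hφ) hsupp.mul_left)
    (integrable_gagliardoForm_integrand μ hs ha ((ha.mul hu).mul hφ) hsupp.mul_left)]
  congr 1 with p
  ring

end GagliardoForm

section LiouvilleReduction

variable {n : ℕ} {s : ℝ} {γ u φ : RR n → ℝ}

lemma Bform_one_eq_gagliardoForm (f g : RR n → ℝ) :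
    Bform n s (fun _ ↦ 1) f g = cns n s / 2 * gagliardoForm volume s f g := by
  simp only [Bform, gagliardoForm, Real.sqrt_one, one_mul, finrank_euclideanSpace_fin,
    Measure.volume_eq_prod]

lemma liouvillePot_mul_sqrt {x : RR n} (hγ : 0 < γ x) :
    liouvillePot n s γ x * √(γ x) =
      -(cns n s / 2 * fracLaplacianIntegral volume s (fun y ↦ √(γ y)) x) := by
  have := (Real.sqrt_pos.2 hγ).ne'
  simp only [liouvillePot, fracLaplacianIntegral, secondDiff, finrank_euclideanSpace_fin]
  field_simp

theorem Bform_eq_Bform_one_add_integral_liouvillePot (hn : 1 ≤ n) (hs : s ∈ Set.Ioo 0 1)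
    (hγ : ∀ x, 0 < γ x) (hγ₁ : BoundedLipschitz fun x ↦ √(γ x))
    (hγ₂ : BoundedSecondDiff fun x ↦ √(γ x)) (hu : BoundedLipschitz u)
    (hφ : BoundedLipschitz φ) (hsupp : HasCompactSupport φ) :
    Bform n s γ u φ =
      Bform n s (fun _ ↦ 1) (fun x ↦ √(γ x) * u x) (fun x ↦ √(γ x) * φ x) +
        ∫ x, liouvillePot n s γ x * (√(γ x) * u x) * (√(γ x) * φ x) := by
  have : Nonempty (Fin n) := ⟨⟨0, hn⟩⟩
  have weighted := integral_mul_mul_sub_mul_sub_eq_gagliardoForm_sub volume hs hγ₁ hu hφ hsupp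
  rw [finrank_euclideanSpace_fin, ← Measure.volume_eq_prod] at weighted
  have potential : ∀ x, liouvillePot n s γ x * (√(γ x) * u x) * (√(γ x) * φ x) =
      -(cns n s / 2) * (fracLaplacianIntegral volume s (fun y ↦ √(γ y)) x *
        (√(γ x) * u x * φ x)) := fun x ↦ by
    linear_combination √(γ x) * u x * φ x * liouvillePot_mul_sqrt (hγ x)
  simp only [potential]
  rw [integral_const_mul, ← gagliardoForm_eq_integral_fracLaplacianIntegral_mul volume hs hγ₁ hγ₂
    ((hγ₁.mul hu).mul hφ) hsupp.mul_left, Bform_one_eq_gagliardoForm, Bform, weighted]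
  ring

theorem fractional_liouville_reduction_equation_general (hn : 1 ≤ n) (hs : s ∈ Set.Ioo 0 1)
    (Ω : Set (RR n)) {k : WithTop ℕ∞} (hk : k ≠ 0) (hγ : ContDiff ℝ k γ) (hpos : ∀ x, 0 < γ x)
    (hγ₁ : BoundedLipschitz fun x ↦ √(γ x)) (hγ₂ : BoundedSecondDiff fun x ↦ √(γ x))
    (hu : BoundedLipschitz u) :
    (∀ φ : RR n → ℝ, ContDiff ℝ k φ → HasCompactSupport φ → tsupport φ ⊆ Ω →
        Bform n s γ u φ = 0) ↔
      ∀ φ : RR n → ℝ, ContDiff ℝ k φ → HasCompactSupport φ → tsupport φ ⊆ Ω →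
        Bform n s (fun _ ↦ 1) (fun x ↦ √(γ x) * u x) φ +
          ∫ x, liouvillePot n s γ x * (√(γ x) * u x) * φ x = 0 := by
  have hsqrt : ContDiff ℝ k fun x ↦ √(γ x) := hγ.sqrt fun x ↦ (hpos x).ne'
  have sqrt_ne_zero : ∀ x, √(γ x) ≠ 0 := fun x ↦ (Real.sqrt_pos.2 (hpos x)).ne'
  have reduction {φ : RR n → ℝ} (hφ : ContDiff ℝ k φ) (hsupp : HasCompactSupport φ) :=
    Bform_eq_Bform_one_add_integral_liouvillePot hn hs hpos hγ₁ hγ₂ hu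
      (.of_contDiff_of_hasCompactSupport hk hφ hsupp) hsupp
  constructor <;> intro H φ hφ hsupp hΩ
  · have hθ : ContDiff ℝ k fun x ↦ (√(γ x))⁻¹ * φ x := (hsqrt.inv sqrt_ne_zero).mul hφ
    have weak := H _ hθ hsupp.mul_left (tsupport_mul_subset_right.trans hΩ)
    rw [reduction hθ hsupp.mul_left] at weak
    simpa only [mul_inv_cancel_left₀ (sqrt_ne_zero _)] using weak
  · rw [reduction hφ hsupp]
    exact H _ (hsqrt.mul hφ) hsupp.mul_left (tsupport_mul_subset_right.trans hΩ)

end LiouvilleReduction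

/-- Fractional Liouville reduction, equation form: u is a weak solution of C^s_γ u = 0 in Ω
if and only if w = γ^{1/2} u is a weak solution of ((-Δ)^s + q_γ) w = 0 in Ω. -/
theorem fractional_liouville_reduction_equation
    (n : ℕ) (hn : 1 ≤ n) (s : ℝ) (hs : s ∈ Set.Ioo (0 : ℝ) 1)
    (Ω : Set (RR n)) (hΩ : IsOpen Ω)
    (γ : RR n → ℝ) (hγ : ContDiff ℝ (⊤ : ℕ∞) γ)
    (γ₀ : ℝ) (hγ₀ : 0 < γ₀) (hlb : ∀ x, γ₀ ≤ γ x)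
    (hsupp : HasCompactSupport (fun x => γ x - 1))
    (u : SchwartzMap (RR n) ℝ) :
    (∀ φ : RR n → ℝ, ContDiff ℝ (⊤ : ℕ∞) φ → HasCompactSupport φ → tsupport φ ⊆ Ω →
        Bform n s γ (fun z => u z) φ = 0)
      ↔ (∀ φ : RR n → ℝ, ContDiff ℝ (⊤ : ℕ∞) φ → HasCompactSupport φ → tsupport φ ⊆ Ω →
        Bform n s (fun _ => 1) (fun x => Real.sqrt (γ x) * u x) φ
          + ∫ x : RR n, liouvillePot n s γ x * (Real.sqrt (γ x) * u x) * φ x = 0) := by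
  have hpos : ∀ x, 0 < γ x := fun x ↦ hγ₀.trans_le (hlb x)
  exact fractional_liouville_reduction_equation_general hn hs Ω (by simp) hγ hpos
    (.sqrt_of_hasCompactSupport_sub_one (by simp) hγ hpos hsupp)
    (.sqrt_of_hasCompactSupport_sub_one (hγ.of_le (WithTop.coe_le_coe.2 le_top)) hpos hsupp)
    (.of_schwartzMap u)
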